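/- arXiv:1102.2637 — 2 statements merged into one kernel-verified Lean document; each statement's English description precedes it below -/
import Mathlib

section
/- Let n ≥ 2 and let U = I₁×⋯×Iₙ ⊆ ℝⁿ be an open box carrying a diagonal metric with smooth positive Lamé coefficients H₁,…,Hₙ, h = H₁⋯Hₙ, and Δψ = h⁻¹ ∑ᵢ ∂ᵢ((h/Hᵢ²)∂ᵢψ). Let V : U → ℝ be continuous, k ∈ ℝ, R : U → ℝ smooth and nowhere zero, and pᵢ, qᵢ : Iᵢ → ℝ continuous. Suppose that for EVERY choice of C² functions φᵢ : Iᵢ → ℝ satisfying φᵢ'' + pᵢφᵢ' + qᵢφᵢ = 0 the function ψ(u) = R(u)·∏ᵢ φᵢ(uⁱ) satisfies Δψ + (k² − V)ψ = 0 on U. Then for each i, ∂ᵢ ln(R² h/Hᵢ²)(u) = pᵢ(uⁱ) on U (and hence ∂ᵢ∂ⱼ ln(R² h/Hᵢ²) = 0 for all j ≠ i), and the R-equation ΔR + (k² − V − ∑ᵢ qᵢ/Hᵢ²)R = 0 holds on U. -/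
/-- The partial derivative of `f : ℝⁿ → ℝ` in the `i`-th coordinate direction,
taken as a line (directional) derivative. -/
noncomputable def pd {n : ℕ} (i : Fin n) (f : (Fin n → ℝ) → ℝ) (x : Fin n → ℝ) : ℝ :=
  lineDeriv ℝ f x (Pi.single i 1)

section ODE
open Set MeasureTheory

noncomputable def picardTerm {E : Type*} [NormedAddCommGroup E] [NormedSpace ℝ E]
    (A : ℝ → E →L[ℝ] E) (x0 : ℝ) (c : E) : ℕ → ℝ → E
  | 0 => fun _ => c
  | m + 1 => fun t => ∫ s in x0..t, A s (picardTerm A x0 c m s)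

theorem hasDerivAt_int {E : Type*} [NormedAddCommGroup E] [NormedSpace ℝ E] [CompleteSpace E]
    {I : Set ℝ} (hIo : IsOpen I) (hIc : I.OrdConnected) {f : ℝ → E} (hf : ContinuousOn f I)
    {x0 t : ℝ} (hx0 : x0 ∈ I) (ht : t ∈ I) :
    HasDerivAt (fun t => ∫ s in x0..t, f s) (f t) t := by
  apply intervalIntegral.integral_hasDerivAt_right
  · exact (hf.mono (hIc.uIcc_subset hx0 ht)).intervalIntegrable
  · exact hf.stronglyMeasurableAtFilter hIo t ht
  · exact hf.continuousAt (hIo.mem_nhds ht)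

theorem picardTerm_cont {E : Type*} [NormedAddCommGroup E] [NormedSpace ℝ E] [CompleteSpace E]
    {I : Set ℝ} (hIo : IsOpen I) (hIc : I.OrdConnected) {A : ℝ → E →L[ℝ] E}
    (hA : ContinuousOn A I) {x0 : ℝ} (hx0 : x0 ∈ I) (c : E) (m : ℕ) :
    ContinuousOn (picardTerm A x0 c m) I := by
  induction m with
  | zero => exact continuousOn_const
  | succ m ih =>
    intro t ht
    exact (hasDerivAt_int hIo hIc (hA.clm_apply ih) hx0 ht).continuousAt.continuousWithinAt

theorem picardTerm_bound {E : Type*} [NormedAddCommGroup E] [NormedSpace ℝ E] [CompleteSpace E]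
    {a b : ℝ} {A : ℝ → E →L[ℝ] E} {K : ℝ}
    (hK : ∀ t ∈ Icc a b, ‖A t‖ ≤ K) {x0 : ℝ} (hx0 : x0 ∈ Icc a b) (c : E) (m : ℕ) :
    ∀ t ∈ Icc a b, ‖picardTerm A x0 c m t‖ ≤ ‖c‖ * (K ^ m * |t - x0| ^ m / m.factorial) := by
  have hK0 : 0 ≤ K := (norm_nonneg _).trans (hK x0 hx0)
  induction m with
  | zero => intro t ht; simp [picardTerm]
  | succ m ih =>
    intro t ht
    have h1 : ‖∫ s in x0..t, A s (picardTerm A x0 c m s)‖ ≤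
        |∫ s in x0..t, (‖c‖ * K ^ (m+1) / m.factorial) * |s - x0| ^ m| := by
      apply intervalIntegral.norm_integral_le_abs_of_norm_le
      · rw [ae_restrict_iff' measurableSet_uIoc]
        refine ae_of_all _ fun s hs => ?_
        have hs' : s ∈ Icc a b := (uIcc_subset_Icc hx0 ht) (uIoc_subset_uIcc hs)
        calc _ ≤ ‖A s‖ * ‖picardTerm A x0 c m s‖ := (A s).le_opNorm _
          _ ≤ K * (‖c‖ * (K ^ m * |s - x0| ^ m / m.factorial)) := by
            gcongr
            · exact hK s hs'
            · exact ih s hs'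
          _ = _ := by ring
      · apply Continuous.intervalIntegrable
        fun_prop
    refine h1.trans (le_of_eq ?_)
    rw [intervalIntegral.integral_const_mul, abs_mul,
      intervalIntegral.abs_integral_eq_abs_integral_uIoc, integral_pow_abs_sub_uIoc,
      abs_of_nonneg (by positivity), abs_of_nonneg (by positivity), Nat.factorial_succ]
    push_cast
    field_simp

theorem exists_linear_ode {E : Type*} [NormedAddCommGroup E] [NormedSpace ℝ E] [CompleteSpace E]
    {I : Set ℝ} (hIo : IsOpen I) (hIc : I.OrdConnected) {A : ℝ → E →L[ℝ] E}
    (hA : ContinuousOn A I) {x0 : ℝ} (hx0 : x0 ∈ I) (c : E) :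
    ∃ y : ℝ → E, y x0 = c ∧ ∀ t ∈ I, HasDerivAt y (A t (y t)) t := by
  set T := picardTerm A x0 c with hT
  have hTc : ∀ m, ContinuousOn (T m) I := picardTerm_cont hIo hIc hA hx0 c
  -- uniform bounds on compact intervals
  have key : ∀ t ∈ I, ∃ a b, a < t ∧ t < b ∧ x0 ∈ Icc a b ∧ Icc a b ⊆ I := by
    intro t ht
    obtain ⟨ε, hε, hb⟩ := Metric.isOpen_iff.1 hIo t ht
    have h1 : t - ε/2 ∈ I := hb (by rw [Metric.mem_ball, Real.dist_eq, abs_lt]; constructor <;> linarith)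
    have h2 : t + ε/2 ∈ I := hb (by rw [Metric.mem_ball, Real.dist_eq, abs_lt]; constructor <;> linarith)
    refine ⟨min x0 (t - ε/2), max x0 (t + ε/2), ?_, ?_, ⟨min_le_left _ _, le_max_left _ _⟩, ?_⟩
    · exact (min_le_right _ _).trans_lt (by linarith)
    · exact lt_of_lt_of_le (by linarith) (le_max_right _ _)
    · apply hIc.out
      · rcases min_choice x0 (t - ε/2) with h | h <;> rw [h] <;> assumption
      · rcases max_choice x0 (t + ε/2) with h | h <;> rw [h] <;> assumption
  have bd : ∀ a b, x0 ∈ Icc a b → Icc a b ⊆ I → ∃ K : ℝ, ∃ B : ℕ → ℝ, Summable B ∧ 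
      (∀ t ∈ Icc a b, ‖A t‖ ≤ K) ∧ 
      ∀ m, ∀ t ∈ Icc a b, ‖T m t‖ ≤ B m := by
    intro a b hx hab
    obtain ⟨K, hK⟩ := isCompact_Icc.exists_bound_of_continuousOn (hA.mono hab)
    have hK0 : 0 ≤ K := (norm_nonneg _).trans (hK x0 hx)
    refine ⟨K, fun m => ‖c‖ * ((K * (b - a)) ^ m / m.factorial), 
      (Real.summable_pow_div_factorial _).mul_left _, hK, fun m t ht => ?_⟩
    refine (picardTerm_bound hK hx c m t ht).trans ?_
    beta_reduce
    rw [mul_pow]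
    gcongr
    rw [abs_le]; constructor <;> linarith [hx.1, hx.2, ht.1, ht.2]
  set y : ℝ → E := fun t => ∑' m, T m t with hy
  have hyc : ContinuousOn y I := by
    intro t ht
    obtain ⟨a, b, hat, htb, hx, hab⟩ := key t ht
    obtain ⟨K, B, hB, hK, hBT⟩ := bd a b hx hab
    exact ((continuousOn_tsum (fun m => (hTc m).mono hab) hB hBT).continuousAt
      (Icc_mem_nhds hat htb)).continuousWithinAt
  have hyi : ∀ t ∈ I, y t = c + ∫ s in x0..t, A s (y s) := by
    intro t ht
    obtain ⟨a, b, hat, htb, hx, hab⟩ := key t ht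
    obtain ⟨K, B, hB, hK, hBT⟩ := bd a b hx hab
    have hK0 : 0 ≤ K := (norm_nonneg _).trans (hK x0 hx)
    have htab : t ∈ Icc a b := ⟨hat.le, htb.le⟩
    have hsum : ∀ s ∈ Icc a b, Summable fun m => T m s := fun s hs =>
      Summable.of_norm_bounded hB (fun m => hBT m s hs)
    have hsub : ∀ s ∈ uIoc x0 t, s ∈ Icc a b := fun s hs =>
      (uIcc_subset_Icc hx htab) (uIoc_subset_uIcc hs)
    have hs2 : HasSum (fun m => ∫ s in x0..t, A s (T m s)) (∫ s in x0..t, A s (y s)) := by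
      apply intervalIntegral.hasSum_integral_of_dominated_convergence (fun m _ => K * B m)
      · intro m
        exact (((hA.clm_apply (hTc m)).mono ((uIcc_subset_Icc hx htab).trans hab)).mono 
          uIoc_subset_uIcc).aestronglyMeasurable measurableSet_uIoc
      · intro m
        refine ae_of_all _ fun s hs => ((A s).le_opNorm _).trans ?_
        gcongr
        · exact hK s (hsub s hs)
        · exact hBT m s (hsub s hs)
      · exact ae_of_all _ fun s hs => hB.mul_left K
      · exact intervalIntegrable_const
      · exact ae_of_all _ fun s hs => (A s).hasSum (hsum s (hsub s hs)).hasSum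
    show ∑' m, T m t = _
    rw [(hsum t htab).tsum_eq_zero_add, ← hs2.tsum_eq]
    rfl
  refine ⟨y, ?_, fun t ht => ?_⟩
  · rw [hyi x0 hx0]; simp
  · have := (hasDerivAt_int hIo hIc (hA.clm_apply hyc) hx0 ht).const_add c
    refine this.congr_of_eventuallyEq ?_
    filter_upwards [hIo.mem_nhds ht] with s hs using hyi s hs

theorem exists_second_order {I : Set ℝ} (hIo : IsOpen I) (hIc : I.OrdConnected) {p q : ℝ → ℝ}
    (hp : ContinuousOn p I) (hq : ContinuousOn q I) {x0 : ℝ} (hx0 : x0 ∈ I) (a b : ℝ) :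
    ∃ φ : ℝ → ℝ, ContDiffOn ℝ 2 φ I ∧
      (∀ x ∈ I, deriv (deriv φ) x + p x * deriv φ x + q x * φ x = 0) ∧
      φ x0 = a ∧ deriv φ x0 = b := by
  let F := ContinuousLinearMap.fst ℝ ℝ ℝ
  let S := ContinuousLinearMap.snd ℝ ℝ ℝ
  let A : ℝ → (ℝ × ℝ) →L[ℝ] (ℝ × ℝ) := fun t =>
    S.prod 0 - p t • (0 : (ℝ × ℝ) →L[ℝ] ℝ).prod S - q t • (0 : (ℝ × ℝ) →L[ℝ] ℝ).prod F
  have hA : ContinuousOn A I := by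
    have := continuousOn_const (c := S.prod (0 : (ℝ × ℝ) →L[ℝ] ℝ)) (s := I)
    exact (this.sub (hp.smul continuousOn_const)).sub (hq.smul continuousOn_const)
  obtain ⟨y, hy0, hy⟩ := exists_linear_ode hIo hIc hA hx0 (a, b)
  have h1 : ∀ t ∈ I, HasDerivAt (fun t => (y t).1) (y t).2 t := by
    intro t ht
    have := (F.hasFDerivAt.comp_hasDerivAt t (hy t ht))
    simpa [A, F, S, Function.comp_def] using this
  have h2 : ∀ t ∈ I, HasDerivAt (fun t => (y t).2) (- p t * (y t).2 - q t * (y t).1) t := by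
    intro t ht
    have := (S.hasFDerivAt.comp_hasDerivAt t (hy t ht))
    simpa [A, F, S, Function.comp_def] using this
  have e1 : ∀ t ∈ I, deriv (fun t => (y t).1) t = (y t).2 := fun t ht => (h1 t ht).deriv
  have e2 : ∀ t ∈ I, deriv (deriv (fun t => (y t).1)) t = - p t * (y t).2 - q t * (y t).1 := by
    intro t ht
    rw [Filter.EventuallyEq.deriv_eq (f := fun t => (y t).2), (h2 t ht).deriv]
    filter_upwards [hIo.mem_nhds ht] with s hs using e1 s hs
  have c1 : ContinuousOn (fun t => (y t).1) I := fun t ht => (h1 t ht).continuousAt.continuousWithinAt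
  have c2 : ContinuousOn (fun t => (y t).2) I := fun t ht => (h2 t ht).continuousAt.continuousWithinAt
  have d1 : DifferentiableOn ℝ (fun t => (y t).1) I := 
    fun t ht => (h1 t ht).differentiableAt.differentiableWithinAt
  have d2 : DifferentiableOn ℝ (fun t => (y t).2) I := 
    fun t ht => (h2 t ht).differentiableAt.differentiableWithinAt
  refine ⟨fun t => (y t).1, ?_, ?_, ?_, ?_⟩
  · rw [show (2 : WithTop ℕ∞) = 1 + 1 by norm_num, contDiffOn_succ_iff_deriv_of_isOpen hIo]
    refine ⟨d1, by simp, ?_⟩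
    rw [show (1 : WithTop ℕ∞) = 0 + 1 by norm_num, contDiffOn_succ_iff_deriv_of_isOpen hIo]
    refine ⟨d2.congr e1, by simp, ?_⟩
    rw [contDiffOn_zero]
    exact ((hp.neg.mul c2).sub (hq.mul c1)).congr e2
  · intro x hx
    rw [e2 x hx, e1 x hx]; ring
  · simp [hy0]
  · rw [e1 x0 hx0, hy0]

end ODE

theorem pd_eq {n : ℕ} (i : Fin n) {f : (Fin n → ℝ) → ℝ} {x : Fin n → ℝ}
    (hf : DifferentiableAt ℝ f x) : pd i f x = fderiv ℝ f x (Pi.single i 1) :=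
  hf.lineDeriv_eq_fderiv

theorem hasLine_pd {n : ℕ} (i : Fin n) {f : (Fin n → ℝ) → ℝ} {x : Fin n → ℝ}
    (hf : DifferentiableAt ℝ f x) : HasLineDerivAt ℝ f (pd i f x) x (Pi.single i 1) := by
  rw [pd_eq i hf]; exact hf.hasFDerivAt.hasLineDerivAt _

theorem contDiffOn_pd {n : ℕ} (i : Fin n) {f : (Fin n → ℝ) → ℝ} {U : Set (Fin n → ℝ)}
    (hU : IsOpen U) (hf : ContDiffOn ℝ (⊤ : ℕ∞) f U) : ContDiffOn ℝ (⊤ : ℕ∞) (pd i f) U := by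
  have h1 : ContDiffOn ℝ (⊤ : ℕ∞) (fderiv ℝ f) U := hf.fderiv_of_isOpen hU (by simp)
  refine (h1.clm_apply (contDiffOn_const (c := Pi.single i (1 : ℝ)))).congr fun x hx => ?_
  exact pd_eq i ((hf.contDiffAt (hU.mem_nhds hx)).differentiableAt (by simp))

theorem pd_comm {n : ℕ} (i j : Fin n) {f : (Fin n → ℝ) → ℝ} {U : Set (Fin n → ℝ)}
    (hU : IsOpen U) (hf : ContDiffOn ℝ (⊤ : ℕ∞) f U) {u : Fin n → ℝ} (hu : u ∈ U) :
    pd i (pd j f) u = pd j (pd i f) u := by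
  have hd : ∀ x ∈ U, DifferentiableAt ℝ f x := fun x hx =>
    (hf.contDiffAt (hU.mem_nhds hx)).differentiableAt (by simp)
  have h1 : ContDiffOn ℝ (⊤ : ℕ∞) (fderiv ℝ f) U := hf.fderiv_of_isOpen hU (by simp)
  have h1d : DifferentiableAt ℝ (fderiv ℝ f) u :=
    (h1.contDiffAt (hU.mem_nhds hu)).differentiableAt (by simp)
  have key : ∀ a b : Fin n, pd a (pd b f) u =
      fderiv ℝ (fderiv ℝ f) u (Pi.single a 1) (Pi.single b 1) := by
    intro a b
    have e : pd b f =ᶠ[nhds u] fun x => fderiv ℝ f x (Pi.single b 1) := by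
      filter_upwards [hU.mem_nhds hu] with x hx using pd_eq b (hd x hx)
    have h2 : pd a (pd b f) u = pd a (fun x => fderiv ℝ f x (Pi.single b 1)) u :=
      e.lineDeriv_eq
    rw [h2, pd_eq a (h1d.clm_apply (differentiableAt_const _)),
      fderiv_clm_apply h1d (differentiableAt_const _)]
    simp
  rw [key, key]
  exact (hf.contDiffAt (hU.mem_nhds hu)).isSymmSndFDerivAt (by
    simp only [minSmoothness_of_isRCLikeNormedField]
    exact WithTop.coe_le_coe.2 (le_top : (2 : ℕ∞) ≤ ⊤)) _ _

theorem hasLine_sep {n : ℕ} (i : Fin n) {F : (Fin n → ℝ) → ℝ} {F' : ℝ} {u : Fin n → ℝ}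
    (hF : HasLineDerivAt ℝ F F' u (Pi.single i 1)) {θ : ℝ → ℝ} {θ' : ℝ}
    (hθ : HasDerivAt θ θ' (u i)) (φ : Fin n → ℝ → ℝ) :
    HasLineDerivAt ℝ (fun v => F v * (θ (v i) * ∏ l ∈ Finset.univ.erase i, φ l (v l)))
      ((F' * θ (u i) + F u * θ') * ∏ l ∈ Finset.univ.erase i, φ l (u l)) u (Pi.single i 1) := by
  unfold HasLineDerivAt at hF ⊢
  have e : ∀ t : ℝ, ∏ l ∈ Finset.univ.erase i, φ l ((u + t • (Pi.single i 1 : Fin n → ℝ)) l)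
      = ∏ l ∈ Finset.univ.erase i, φ l (u l) := by
    intro t
    refine Finset.prod_congr rfl fun l hl => ?_
    have : l ≠ i := Finset.ne_of_mem_erase hl
    simp [this]
  have e2 : ∀ t : ℝ, (u + t • (Pi.single i 1 : Fin n → ℝ)) i = u i + t := by intro t; simp
  simp only [e, e2]
  have h3 : HasDerivAt (fun t : ℝ => θ (u i + t)) θ' 0 := by
    have := HasDerivAt.comp_const_add (u i) 0 (f := θ) (f' := θ') (by simpa using hθ)
    exact this
  have := hF.mul (h3.mul_const (∏ l ∈ Finset.univ.erase i, φ l (u l)))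
  refine this.congr_deriv ?_
  simp
  ring

theorem pd_sep {n : ℕ} (i : Fin n) {I : Fin n → Set ℝ} (hIo : ∀ i, IsOpen (I i))
    {U : Set (Fin n → ℝ)} (hUo : IsOpen U) (hU : U = {u | ∀ i, u i ∈ I i})
    {g R : (Fin n → ℝ) → ℝ} (hg : ContDiffOn ℝ (⊤ : ℕ∞) g U) (hR : ContDiffOn ℝ (⊤ : ℕ∞) R U)
    (φ : Fin n → ℝ → ℝ) (hφ : ∀ i, ContDiffOn ℝ 2 (φ i) (I i)) {u : Fin n → ℝ} (hu : u ∈ U) :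
    pd i (fun v => g v * pd i (fun w => R w * ∏ l, φ l (w l)) v) u =
      (pd i (fun v => g v * pd i R v) u * φ i (u i)
        + (g u * pd i R u + pd i (fun v => g v * R v) u) * deriv (φ i) (u i)
        + g u * R u * deriv (deriv (φ i)) (u i)) * ∏ l ∈ Finset.univ.erase i, φ l (u l) := by
  have dif : ∀ {f : (Fin n → ℝ) → ℝ}, ContDiffOn ℝ (⊤ : ℕ∞) f U → ∀ x ∈ U,
      DifferentiableAt ℝ f x := fun hf x hx =>
    (hf.contDiffAt (hUo.mem_nhds hx)).differentiableAt (by simp)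
  have hmem : ∀ x ∈ U, x i ∈ I i := by
    intro x hx
    rw [hU] at hx
    exact hx i
  have hφ1 : ∀ x ∈ I i, HasDerivAt (φ i) (deriv (φ i) x) x := fun x hx =>
    (((hφ i).contDiffAt ((hIo i).mem_nhds hx)).differentiableAt (by simp)).hasDerivAt
  have hφ2 : ∀ x ∈ I i, HasDerivAt (deriv (φ i)) (deriv (deriv (φ i)) x) x := by
    intro x hx
    have h2 := hφ i
    rw [show (2 : WithTop ℕ∞) = 1 + 1 by norm_num, contDiffOn_succ_iff_deriv_of_isOpen (hIo i)] at h2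
    exact ((h2.2.2.contDiffAt ((hIo i).mem_nhds hx)).differentiableAt (by simp)).hasDerivAt
  have hprod : ∀ w : Fin n → ℝ, ∏ l, φ l (w l) =
      φ i (w i) * ∏ l ∈ Finset.univ.erase i, φ l (w l) := fun w =>
    (Finset.mul_prod_erase _ _ (Finset.mem_univ i)).symm
  have inner : ∀ v ∈ U, pd i (fun w => R w * ∏ l, φ l (w l)) v =
      (pd i R v * φ i (v i) + R v * deriv (φ i) (v i))
        * ∏ l ∈ Finset.univ.erase i, φ l (v l) := by
    intro v hv
    simp only [hprod]
    exact (hasLine_sep i (hasLine_pd i (dif hR v hv)) (hφ1 _ (hmem v hv)) φ).lineDeriv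
  have e : (fun v => g v * pd i (fun w => R w * ∏ l, φ l (w l)) v) =ᶠ[nhds u]
      fun v => (g v * pd i R v) * (φ i (v i) * ∏ l ∈ Finset.univ.erase i, φ l (v l))
        + (g v * R v) * (deriv (φ i) (v i) * ∏ l ∈ Finset.univ.erase i, φ l (v l)) := by
    filter_upwards [hUo.mem_nhds hu] with v hv
    rw [inner v hv]; ring
  have e' := e.lineDeriv_eq (𝕜 := ℝ) (v := Pi.single i 1)
  have hF := hasLine_sep i (hasLine_pd i (dif (hg.mul (contDiffOn_pd i hUo hR)) u hu))
    (hφ1 _ (hmem u hu)) φ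
  have hG := hasLine_sep i (hasLine_pd i (dif (hg.mul hR) u hu)) (hφ2 _ (hmem u hu)) φ
  unfold HasLineDerivAt at hF hG
  have hFG := hF.add hG
  have e3 := e'.trans hFG.deriv
  refine Eq.trans e3 ?_
  ring

/-- **Necessity of the two conditions of R-separability (Theorem 3, "only if" part).**
On an open box `U = I₁ × ⋯ × Iₙ` with diagonal metric given by smooth positive Lamé
coefficients `Hᵢ`, `h = H₁⋯Hₙ` and `Δψ = h⁻¹ ∑ᵢ ∂ᵢ((h/Hᵢ²)∂ᵢψ)`: if for EVERY choice of
`C²` solutions `φᵢ` of `φᵢ'' + pᵢφᵢ' + qᵢφᵢ = 0` the function `ψ = R·∏ᵢφᵢ(uⁱ)` satisfies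
`Δψ + (k² - V)ψ = 0` on `U`, then `∂ᵢ ln(R² h/Hᵢ²) = pᵢ(uⁱ)` on `U` (hence the mixed
second logarithmic derivatives vanish) and the `R`-equation
`ΔR + (k² - V - ∑ᵢ qᵢ/Hᵢ²) R = 0` holds on `U`. -/
theorem R_separability_necessary (n : ℕ) (hn : 2 ≤ n)
    (I : Fin n → Set ℝ) (hIo : ∀ i, IsOpen (I i)) (hIc : ∀ i, (I i).OrdConnected)
    (U : Set (Fin n → ℝ)) (hU : U = {u | ∀ i, u i ∈ I i})
    (H : Fin n → (Fin n → ℝ) → ℝ) (hH : ∀ i, ContDiffOn ℝ (⊤ : ℕ∞) (H i) U)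
    (hHpos : ∀ i, ∀ u ∈ U, 0 < H i u)
    (h : (Fin n → ℝ) → ℝ) (hh : ∀ u, h u = ∏ i, H i u)
    (V : (Fin n → ℝ) → ℝ) (hV : ContinuousOn V U) (k : ℝ)
    (R : (Fin n → ℝ) → ℝ) (hR : ContDiffOn ℝ (⊤ : ℕ∞) R U) (hRne : ∀ u ∈ U, R u ≠ 0)
    (p q : Fin n → ℝ → ℝ)
    (hp : ∀ i, ContinuousOn (p i) (I i)) (hq : ∀ i, ContinuousOn (q i) (I i))
    (hsep : ∀ φ : Fin n → ℝ → ℝ,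
      (∀ i, ContDiffOn ℝ 2 (φ i) (I i)) →
      (∀ i, ∀ x ∈ I i,
        deriv (deriv (φ i)) x + p i x * deriv (φ i) x + q i x * φ i x = 0) →
      ∀ u ∈ U,
        (h u)⁻¹ * ∑ i, pd i
            (fun v => h v / H i v ^ 2 * pd i (fun w => R w * ∏ l, φ l (w l)) v) u
          + (k ^ 2 - V u) * (R u * ∏ l, φ l (u l)) = 0) :
    (∀ i, ∀ u ∈ U,
      pd i (fun v => Real.log (R v ^ 2 * h v / H i v ^ 2)) u = p i (u i)) ∧
    (∀ i j : Fin n, j ≠ i → ∀ u ∈ U,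
      pd i (pd j fun v => Real.log (R v ^ 2 * h v / H i v ^ 2)) u = 0) ∧
    (∀ u ∈ U,
      (h u)⁻¹ * ∑ i, pd i (fun v => h v / H i v ^ 2 * pd i R v) u
        + (k ^ 2 - V u - ∑ i, q i (u i) / H i u ^ 2) * R u = 0) := by
  have hUo : IsOpen U := by
    have : U = Set.univ.pi I := by rw [hU]; ext; simp
    rw [this]; exact isOpen_set_pi Set.finite_univ fun i _ => hIo i
  have hmem : ∀ x ∈ U, ∀ i, x i ∈ I i := by
    intro x hx
    rw [hU] at hx
    exact hx
  have hhs : ContDiffOn ℝ (⊤ : ℕ∞) h U := by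
    rw [show h = fun u => ∏ i, H i u from funext hh]
    exact contDiffOn_prod fun i _ => hH i
  have hhpos : ∀ u ∈ U, 0 < h u := fun u hu => by
    rw [hh]; exact Finset.prod_pos fun i _ => hHpos i u hu
  have hg : ∀ i, ContDiffOn ℝ (⊤ : ℕ∞) (fun v => h v / H i v ^ 2) U := fun i =>
    hhs.div ((hH i).pow 2) fun u hu => pow_ne_zero _ (hHpos i u hu).ne'
  have hG : ∀ i, ContDiffOn ℝ (⊤ : ℕ∞) (fun v => h v / H i v ^ 2 * R v) U := fun i =>
    (hg i).mul hR
  have dif : ∀ {f : (Fin n → ℝ) → ℝ}, ContDiffOn ℝ (⊤ : ℕ∞) f U → ∀ x ∈ U,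
      DifferentiableAt ℝ f x := fun hf x hx =>
    (hf.contDiffAt (hUo.mem_nhds hx)).differentiableAt (by simp)
  -- the separated equation tested on solutions with value `1` and slope `d i` at `u i`
  have test : ∀ u ∈ U, ∀ d : Fin n → ℝ,
      (h u)⁻¹ * ∑ i, (pd i (fun v => h v / H i v ^ 2 * pd i R v) u
          - h u / H i u ^ 2 * R u * q i (u i)
          + (h u / H i u ^ 2 * pd i R u + pd i (fun v => h v / H i v ^ 2 * R v) u
              - h u / H i u ^ 2 * R u * p i (u i)) * d i)
        + (k ^ 2 - V u) * R u = 0 := by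
    intro u hu d
    choose φ hφ1 hφ2 hφ3 hφ4 using fun i =>
      exists_second_order (hIo i) (hIc i) (hp i) (hq i) (hmem u hu i) 1 (d i)
    have := hsep φ hφ1 hφ2 u hu
    rw [← this]
    have hs : ∀ i ∈ Finset.univ, pd i
        (fun v => h v / H i v ^ 2 * pd i (fun w => R w * ∏ l, φ l (w l)) v) u =
        (pd i (fun v => h v / H i v ^ 2 * pd i R v) u
          - h u / H i u ^ 2 * R u * q i (u i)
          + (h u / H i u ^ 2 * pd i R u + pd i (fun v => h v / H i v ^ 2 * R v) u
              - h u / H i u ^ 2 * R u * p i (u i)) * d i) := by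
      intro i _
      rw [pd_sep i hIo hUo hU (hg i) hR φ hφ1 hu]
      have h2 := hφ2 i (u i) (hmem u hu i)
      rw [hφ3, hφ4] at h2
      have h3 : deriv (deriv (φ i)) (u i) = - p i (u i) * d i - q i (u i) := by linarith
      simp only [hφ3, hφ4, h3, Finset.prod_const_one]
      ring
    rw [Finset.sum_congr rfl hs]
    simp [hφ3]
  have test0 : ∀ u ∈ U, (h u)⁻¹ * ∑ i, (pd i (fun v => h v / H i v ^ 2 * pd i R v) u
          - h u / H i u ^ 2 * R u * q i (u i)) + (k ^ 2 - V u) * R u = 0 := by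
    intro u hu
    simpa using test u hu 0
  have test1 : ∀ u ∈ U, ∀ j, pd j (fun v => h v / H j v ^ 2 * R v) u =
      h u / H j u ^ 2 * R u * p j (u j) - h u / H j u ^ 2 * pd j R u := by
    intro u hu j
    have h0 := test0 u hu
    have h1 := test u hu (Pi.single j 1)
    rw [Finset.sum_add_distrib, mul_add] at h1
    have h2 : (h u)⁻¹ * ∑ i, (h u / H i u ^ 2 * pd i R u + pd i (fun v => h v / H i v ^ 2 * R v) u
              - h u / H i u ^ 2 * R u * p i (u i)) * (Pi.single j 1 : Fin n → ℝ) i = 0 := by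
      linarith
    have h3 := (mul_eq_zero.1 h2).resolve_left (inv_ne_zero (hhpos u hu).ne')
    rw [Finset.sum_eq_single j (fun b _ hb => by simp [hb]) (by simp)] at h3
    simp only [Pi.single_eq_same, mul_one] at h3
    linarith
  have hlogeq : ∀ i, (fun v => Real.log (R v ^ 2 * h v / H i v ^ 2)) =
      fun v => Real.log (R v * (h v / H i v ^ 2 * R v)) := by
    intro i; funext v; congr 1; ring
  have hne : ∀ i, ∀ u ∈ U, R u * (h u / H i u ^ 2 * R u) ≠ 0 := fun i u hu =>
    mul_ne_zero (hRne u hu) (mul_ne_zero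
      (div_pos (hhpos u hu) (pow_pos (hHpos i u hu) 2)).ne' (hRne u hu))
  have hlog : ∀ i, ContDiffOn ℝ (⊤ : ℕ∞) (fun v => Real.log (R v ^ 2 * h v / H i v ^ 2)) U := by
    intro i
    rw [hlogeq]
    exact (hR.mul (hG i)).log (hne i)
  have P1 : ∀ i, ∀ u ∈ U,
      pd i (fun v => Real.log (R v ^ 2 * h v / H i v ^ 2)) u = p i (u i) := by
    intro i u hu
    rw [hlogeq]
    have a1 := hasLine_pd i (dif hR u hu)
    have a2 := hasLine_pd i (dif (hG i) u hu)
    rw [test1 u hu i] at a2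
    unfold HasLineDerivAt at a1 a2
    have a3 := (a1.mul a2).log (by simpa using hne i u hu)
    have a4 := a3.deriv
    refine Eq.trans a4 ?_
    have := hne i u hu
    have h1 := hRne u hu
    have h2 := (hhpos u hu).ne'
    have h3 := (hHpos i u hu).ne'
    simp only [zero_smul, add_zero, Pi.mul_apply]
    field_simp
    ring
  refine ⟨P1, ?_, ?_⟩
  · intro i j hij u hu
    rw [pd_comm i j hUo (hlog i) hu]
    have e : pd i (fun v => Real.log (R v ^ 2 * h v / H i v ^ 2)) =ᶠ[nhds u]
        fun v => p i (v i) := by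
      filter_upwards [hUo.mem_nhds hu] with v hv using P1 i v hv
    refine (e.lineDeriv_eq (𝕜 := ℝ) (v := Pi.single j 1)).trans ?_
    simp [lineDeriv, hij.symm]
  · intro u hu
    have h0 := test0 u hu
    rw [Finset.sum_sub_distrib, mul_sub] at h0
    have h1 : (h u)⁻¹ * ∑ i, h u / H i u ^ 2 * R u * q i (u i) =
        (∑ i, q i (u i) / H i u ^ 2) * R u := by
      rw [Finset.mul_sum, Finset.sum_mul]
      refine Finset.sum_congr rfl fun i _ => ?_
      have h2 := (hhpos u hu).ne'
      have h3 := (hHpos i u hu).ne'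
      field_simp
    rw [h1] at h0
    linarith
end

section
/- Let n ≥ 2 and let U = I₁×⋯×Iₙ ⊆ ℝⁿ be an open box carrying a diagonal metric with smooth positive Lamé coefficients H₁,…,Hₙ, h = H₁⋯Hₙ, and Δψ = h⁻¹ ∑ᵢ ∂ᵢ((h/Hᵢ²)∂ᵢψ). Let R : U → ℝ be smooth and positive, and suppose there are continuous pᵢ, qᵢ : Iᵢ → ℝ with ∂ᵢ ln(R² h/Hᵢ²)(u) = pᵢ(uⁱ) on U and R⁻¹ΔR − ∑ᵢ qᵢ(uⁱ)/Hᵢ² = 0 on U (so the metric is R-separable in the Laplace equation Δψ = 0). Then for any continuous v₁,…,vₙ : Iᵢ → ℝ, setting V(u) = ∑ᵢ vᵢ(uⁱ)/Hᵢ², the following holds: whenever φᵢ : Iᵢ → ℝ are C² with φᵢ'' + pᵢφᵢ' + (qᵢ − vᵢ)φᵢ = 0, the function ψ(u) = R(u)·∏ᵢ φᵢ(uⁱ) satisfies Δψ = Vψ on U. -/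
lemma pd_line {n : ℕ} (i : Fin n) (F : (Fin n → ℝ) → ℝ) (u : Fin n → ℝ) (s : ℝ) :
    pd i F (u + s • Pi.single i 1) = deriv (fun t : ℝ => F (u + t • Pi.single i 1)) s := by
  unfold pd lineDeriv
  have := deriv_comp_const_add (f := fun t : ℝ => F (u + t • Pi.single i 1)) s 0
  simp only [add_zero] at this
  rw [← this]
  congr 1
  funext t
  rw [add_smul, add_assoc]

lemma pd_line_zero {n : ℕ} (i : Fin n) (F : (Fin n → ℝ) → ℝ) (u : Fin n → ℝ) :
    pd i F u = deriv (fun t : ℝ => F (u + t • Pi.single i 1)) 0 := by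
  rw [← pd_line, zero_smul, add_zero]

lemma pd_mul_pd {n : ℕ} (i : Fin n) (g F : (Fin n → ℝ) → ℝ) (u : Fin n → ℝ) :
    pd i (fun v => g v * pd i F v) u = deriv (fun t : ℝ => g (u + t • Pi.single i 1) *
      deriv (fun s : ℝ => F (u + s • Pi.single i 1)) t) 0 := by
  rw [pd_line_zero]
  simp only [pd_line]

lemma diff_deriv {r : ℝ → ℝ} {x : ℝ} (hr : ContDiffAt ℝ 2 r x) :
    DifferentiableAt ℝ (deriv r) x := by
  have h1 : ContDiffAt ℝ 1 (fderiv ℝ r) x := hr.fderiv_right (by norm_num)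
  have h2 : DifferentiableAt ℝ (fun y => fderiv ℝ r y 1) x :=
    (h1.differentiableAt (by norm_num)).clm_apply (differentiableAt_const _)
  exact h2

lemma one_dim (a r f : ℝ → ℝ) (c P : ℝ) (ha : ContDiffAt ℝ 2 a 0) (hr : ContDiffAt ℝ 2 r 0)
    (hf : ContDiffAt ℝ 2 f 0) (ha0 : 0 < a 0) (hr0 : 0 < r 0)
    (hP : deriv (fun t => Real.log (r t ^ 2 * a t)) 0 = P) :
    deriv (fun t => a t * deriv (fun s => r s * (f s * c)) t) 0 =
      c * (f 0 * deriv (fun t => a t * deriv r t) 0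
        + a 0 * r 0 * (deriv (deriv f) 0 + P * deriv f 0)) := by
  have hev : (fun t => a t * deriv (fun s => r s * (f s * c)) t) =ᶠ[nhds 0]
      (fun t => a t * (deriv r t * (f t * c) + r t * (deriv f t * c))) := by
    filter_upwards [hr.eventually (by simp), hf.eventually (by simp)] with t h1 h2
    have d1 := (h1.differentiableAt (by norm_num)).hasDerivAt
    have d2 := (h2.differentiableAt (by norm_num)).hasDerivAt
    have e : deriv (fun s => r s * (f s * c)) t = _ := (d1.mul (d2.mul_const c)).deriv
    rw [e]
  have da := (ha.differentiableAt (by norm_num)).hasDerivAt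
  have dr := (hr.differentiableAt (by norm_num)).hasDerivAt
  have df := (hf.differentiableAt (by norm_num)).hasDerivAt
  have dr2 := (diff_deriv hr).hasDerivAt
  have df2 := (diff_deriv hf).hasDerivAt
  have e1 := (da.mul ((dr2.mul (df.mul_const c)).add (dr.mul (df2.mul_const c)))).deriv
  have e2 := (da.mul dr2).deriv
  have e3 := (((dr.pow 2).mul da).log (by simp only [Pi.mul_apply, Pi.pow_apply]; positivity)).deriv
  have e3' : P = (2 * r 0 * deriv r 0 * a 0 + r 0 ^ 2 * deriv a 0) / (r 0 ^ 2 * a 0) := by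
    have e3'' : deriv (fun t => Real.log (r t ^ 2 * a t)) 0 = _ := e3
    rw [← hP, e3'']
    simp
  rw [hev.deriv_eq]
  have e1' : deriv (fun t => a t * (deriv r t * (f t * c) + r t * (deriv f t * c))) 0 = _ := e1
  have e2' : deriv (fun t => a t * deriv r t) 0 = _ := e2
  rw [e1', e2', e3']
  simp only [Pi.mul_apply, Pi.add_apply]
  field_simp
  ring

/-- **Fixed-energy R-separation (Proposition 1).** On an open box `U = I₁ × ⋯ × Iₙ` with
smooth positive Lamé coefficients `Hᵢ`, `h = H₁⋯Hₙ`, `Δψ = h⁻¹ ∑ᵢ ∂ᵢ((h/Hᵢ²)∂ᵢψ)`: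
suppose `R` is smooth positive with `∂ᵢ ln(R² h/Hᵢ²) = pᵢ(uⁱ)` and
`R⁻¹ΔR - ∑ᵢ qᵢ/Hᵢ² = 0` on `U` (R-separability in the Laplace equation). Then for any
continuous `vᵢ`, with `V = ∑ᵢ vᵢ(uⁱ)/Hᵢ²`, every choice of `C²` solutions `φᵢ` of
`φᵢ'' + pᵢφᵢ' + (qᵢ - vᵢ)φᵢ = 0` yields `ψ = R·∏ᵢφᵢ(uⁱ)` with `Δψ = Vψ` on `U`. -/
theorem fixed_energy_R_separation (n : ℕ) (hn : 2 ≤ n)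
    (I : Fin n → Set ℝ) (hIo : ∀ i, IsOpen (I i)) (hIc : ∀ i, (I i).OrdConnected)
    (U : Set (Fin n → ℝ)) (hU : U = {u | ∀ i, u i ∈ I i})
    (H : Fin n → (Fin n → ℝ) → ℝ) (hH : ∀ i, ContDiffOn ℝ (⊤ : ℕ∞) (H i) U)
    (hHpos : ∀ i, ∀ u ∈ U, 0 < H i u)
    (h : (Fin n → ℝ) → ℝ) (hh : ∀ u, h u = ∏ i, H i u)
    (R : (Fin n → ℝ) → ℝ) (hR : ContDiffOn ℝ (⊤ : ℕ∞) R U) (hRpos : ∀ u ∈ U, 0 < R u)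
    (p q : Fin n → ℝ → ℝ)
    (hp : ∀ i, ContinuousOn (p i) (I i)) (hq : ∀ i, ContinuousOn (q i) (I i))
    (hfirst : ∀ i, ∀ u ∈ U,
      pd i (fun v => Real.log (R v ^ 2 * h v / H i v ^ 2)) u = p i (u i))
    (hReq : ∀ u ∈ U,
      (R u)⁻¹ * ((h u)⁻¹ * ∑ i, pd i (fun v => h v / H i v ^ 2 * pd i R v) u)
        - ∑ i, q i (u i) / H i u ^ 2 = 0)
    (v : Fin n → ℝ → ℝ) (hv : ∀ i, ContinuousOn (v i) (I i))
    (V : (Fin n → ℝ) → ℝ) (hV : ∀ u, V u = ∑ i, v i (u i) / H i u ^ 2)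
    (φ : Fin n → ℝ → ℝ) (hφ : ∀ i, ContDiffOn ℝ 2 (φ i) (I i))
    (hode : ∀ i, ∀ x ∈ I i,
      deriv (deriv (φ i)) x + p i x * deriv (φ i) x + (q i x - v i x) * φ i x = 0)
    (ψ : (Fin n → ℝ) → ℝ) (hψ : ∀ u, ψ u = R u * ∏ i, φ i (u i)) :
    ∀ u ∈ U,
      (h u)⁻¹ * ∑ i, pd i (fun v => h v / H i v ^ 2 * pd i ψ v) u = V u * ψ u := by
  intro u hu
  have hUo : IsOpen U := by
    rw [hU]
    have : {u : Fin n → ℝ | ∀ i, u i ∈ I i} = Set.pi Set.univ I := by ext; simp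
    rw [this]
    exact isOpen_set_pi Set.finite_univ (fun i _ => hIo i)
  have hui : ∀ i, u i ∈ I i := by
    have := hu
    rw [hU] at this
    exact this
  have hHu : ∀ i, 0 < H i u := fun i => hHpos i u hu
  have hhu : 0 < h u := by rw [hh]; exact Finset.prod_pos (fun i _ => hHu i)
  have hRu := hRpos u hu
  have hUn : U ∈ nhds u := hUo.mem_nhds hu
  have cR : ContDiffAt ℝ 2 R u := (hR.contDiffAt hUn).of_le (WithTop.coe_le_coe.2 (le_top : (2 : ℕ∞) ≤ ⊤))
  have cH : ∀ i, ContDiffAt ℝ 2 (H i) u := fun i =>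
    ((hH i).contDiffAt hUn).of_le (WithTop.coe_le_coe.2 (le_top : (2 : ℕ∞) ≤ ⊤))
  have ch : ContDiffAt ℝ 2 h u := by
    have : h = fun u => ∏ i, H i u := funext hh
    rw [this]
    exact contDiffAt_prod (fun i _ => cH i)
  have key : ∀ i, pd i (fun v => h v / H i v ^ 2 * pd i ψ v) u =
      (∏ j, φ j (u j)) * (pd i (fun v => h v / H i v ^ 2 * pd i R v) u
        - h u / H i u ^ 2 * R u * (q i (u i) - v i (u i))) := by
    intro i
    have cL : ContDiffAt ℝ 2 (fun t : ℝ => u + t • (Pi.single i 1 : Fin n → ℝ)) 0 := by fun_prop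
    have L0 : u + (0 : ℝ) • (Pi.single i 1 : Fin n → ℝ) = u := by simp
    have ca : ContDiffAt ℝ 2 (fun v => h v / H i v ^ 2) u :=
      ch.div ((cH i).pow 2) (pow_ne_zero 2 (hHu i).ne')
    have hpψ : (fun s : ℝ => ψ (u + s • (Pi.single i 1 : Fin n → ℝ))) = fun s : ℝ =>
        R (u + s • (Pi.single i 1 : Fin n → ℝ)) *
          (φ i (u i + s) * ∏ j ∈ Finset.univ.erase i, φ j (u j)) := by
      funext s
      rw [hψ, ← Finset.mul_prod_erase _ _ (Finset.mem_univ i)]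
      congr 2
      · simp
      · apply Finset.prod_congr rfl
        intro j hj
        simp [Finset.ne_of_mem_erase hj]
    have hd : ∀ x, deriv (fun s => φ i (u i + s)) x = deriv (φ i) (u i + x) :=
      fun x => deriv_comp_const_add (f := φ i) (u i) x
    have hdd : deriv (deriv (fun s => φ i (u i + s))) 0 = deriv (deriv (φ i)) (u i) := by
      rw [funext hd, deriv_comp_const_add, add_zero]
    have cφ : ContDiffAt ℝ 2 (fun s => φ i (u i + s)) 0 := by
      have : ContDiffAt ℝ 2 (φ i) (u i + 0) := by
        rw [add_zero]; exact (hφ i).contDiffAt ((hIo i).mem_nhds (hui i))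
      exact ContDiffAt.comp (0 : ℝ) this (by fun_prop)
    have hP := hfirst i u hu
    rw [pd_line_zero] at hP
    simp only [mul_div_assoc] at hP
    have o := one_dim (fun t => (fun v => h v / H i v ^ 2) (u + t • (Pi.single i 1 : Fin n → ℝ)))
      (fun t => R (u + t • (Pi.single i 1 : Fin n → ℝ))) (fun s => φ i (u i + s))
      (∏ j ∈ Finset.univ.erase i, φ j (u j)) (p i (u i))
      (ContDiffAt.comp (0 : ℝ) (by rw [L0]; exact ca) cL)
      (ContDiffAt.comp (0 : ℝ) (by rw [L0]; exact cR) cL) cφ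
      (by simp only [L0]; have := hHu i; positivity) (by simp only [L0]; exact hRu) hP
    rw [pd_mul_pd i (fun v => h v / H i v ^ 2) ψ, pd_mul_pd i (fun v => h v / H i v ^ 2) R, hpψ]
    rw [hdd, hd] at o
    simp only [L0, add_zero] at o
    have o2 := hode i (u i) (hui i)
    rw [o, ← Finset.mul_prod_erase _ _ (Finset.mem_univ i)]
    linear_combination (∏ j ∈ Finset.univ.erase i, φ j (u j)) * (h u / H i u ^ 2) * R u * o2
  rw [Finset.sum_congr rfl (fun i _ => key i), ← Finset.mul_sum, Finset.sum_sub_distrib, hV, hψ]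
  have hs : ∑ i, h u / H i u ^ 2 * R u * (q i (u i) - v i (u i)) =
      h u * R u * (∑ i, q i (u i) / H i u ^ 2 - ∑ i, v i (u i) / H i u ^ 2) := by
    rw [← Finset.sum_sub_distrib, Finset.mul_sum]
    apply Finset.sum_congr rfl
    intro i _
    ring
  have e := hReq u hu
  rw [hs]
  rw [sub_eq_zero] at e
  rw [← e]
  field_simp
  ring
end
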